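/- Let F be a free group with finite basis and S₁ ⊆ S₂ normal subgroups of F such that the group P = F/S₂ satisfies S₂ = S₁·[S₂,S₂]. If S₁/[S₁,S₁] is finitely generated as a module over ℤ[F/S₁] (via conjugation), then S₂/[S₂,S₂] is finitely generated as a module over ℤ[F/S₂], i.e. P is of type FP₂. -/

import Mathlib

/-- For a normal subgroup `S` of a free group `F`, the relation module `S/[S,S]`
(with the conjugation action of `F/S`) is finitely generated as a `ℤ[F/S]`-module
iff there is a finite subset `T ⊆ S` with `S = ⟨T^F⟩·[S,S]`, i.e.
`S` is generated by the `F`-normal closure of `T` together with `[S,S]`.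
A finitely generated group `F/S` is of type `FP₂` iff its relation module is
finitely generated. -/
def RelationModuleFG {F : Type} [Group F] (S : Subgroup F) : Prop :=
  ∃ T : Finset F, (T : Set F) ⊆ (S : Set F) ∧
    S = Subgroup.normalClosure (T : Set F) ⊔ ⁅S, S⁆

/-- Let `F` be a finitely generated free group and `S₁ ⊆ S₂` normal subgroups with
`S₂ = S₁·[S₂,S₂]`.  If the relation module `S₁/[S₁,S₁]` is finitely generated over
`ℤ[F/S₁]`, then the relation module `S₂/[S₂,S₂]` is finitely generated over
`ℤ[F/S₂]`, i.e. `P = F/S₂` is of type `FP₂`. -/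
theorem relationModuleFG_of_quotient {m : ℕ}
    (S₁ S₂ : Subgroup (FreeGroup (Fin m))) (h₁ : S₁.Normal) (h₂ : S₂.Normal)
    (hle : S₁ ≤ S₂) (hgen : S₂ = S₁ ⊔ ⁅S₂, S₂⁆)
    (hfg : RelationModuleFG S₁) : RelationModuleFG S₂ := by
  obtain ⟨T, hT, hS₁⟩ := hfg
  -- Lifts of generators of the first relation module also generate the second one:
  -- `S₂ = S₁·[S₂,S₂] = ⟨T^F⟩·[S₁,S₁]·[S₂,S₂]`, and `[S₁,S₁] ≤ [S₂,S₂]`.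
  refine ⟨T, hT.trans hle, le_antisymm ?_ ?_⟩
  · calc S₂ ≤ S₁ ⊔ ⁅S₂, S₂⁆ := hgen.le
      _ ≤ _ := sup_le (hS₁.le.trans (sup_le_sup_left (Subgroup.commutator_mono hle hle) _))
        le_sup_right
  · exact sup_le (Subgroup.normalClosure_le_normal (hT.trans hle)) (Subgroup.commutator_le_left _ _)
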